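/- Consider the two-dimensional set-valued error dynamics ė₁ ∈ e₂ - L k₁ ⌈e₁⌋^{1/2}, ė₂ ∈ δ(t) - L² k₂ S(e₁), where S is the Filippov sign map, k₁, k₂ > 0, L ≥ 1, and |δ(t)| ≤ w̄ for all t. Every absolutely continuous solution is defined for all t ≥ 0 (the right-hand side is upper semi-continuous with compact convex values), and if L² k₂ > w̄ (for appropriate k₁, k₂) the origin e = 0 is reached in finite time from any initial condition. -/

import Mathlib

open MeasureTheory

/-- Signed power. -/
noncomputable def spow (x b : ℝ) : ℝ := Real.sign x * |x| ^ b

/-- Set-valued sign map. -/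
noncomputable def Ssign (a : ℝ) : Set ℝ :=
  if a > 0 then {1} else if a < 0 then {-1} else Set.Icc (-1) 1

/-- An absolutely continuous solution on [0,∞) of the differential inclusion
ė₁ ∈ e₂ - L k₁ ⌈e₁⌋^{1/2}, ė₂ ∈ δ(t) - L² k₂ S(e₁), expressed via integral
representations with a.e.-derivatives satisfying the inclusion. -/
def IsSol2 (k₁ k₂ L : ℝ) (δ e₁ e₂ e₁' e₂' : ℝ → ℝ) : Prop :=
  (∀ s t : ℝ, 0 ≤ s → s ≤ t → IntervalIntegrable e₁' volume s t ∧
      IntervalIntegrable e₂' volume s t) ∧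
  (∀ t : ℝ, 0 ≤ t → e₁ t = e₁ 0 + ∫ u in (0:ℝ)..t, e₁' u) ∧
  (∀ t : ℝ, 0 ≤ t → e₂ t = e₂ 0 + ∫ u in (0:ℝ)..t, e₂' u) ∧
  (∀ᵐ t, 0 ≤ t →
    e₁' t = e₂ t - L * k₁ * spow (e₁ t) (1/2) ∧
    ∃ s ∈ Ssign (e₁ t), e₂' t = δ t - L ^ 2 * k₂ * s)

/-!
*Finite-time convergence.* In the coordinates `ξ = m ⌈e₁⌋^{1/2}`, `v = e₂` the hexagonal norm
`max |v| (max |ξ| |ξ - v|)` is homogeneous of the same weight as time. By the symmetry `e ↦ -e` only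
trajectories with `e₁ > 0` on a short interval to the right matter, and there the norm is
`max v (max ξ (ξ - v))`. While `v` is maximal it decreases because `L² k₂ > w`; while `ξ` is maximal
we have `v ≤ ξ` and `2 ξ' = m (v / ⌈e₁⌋^{1/2} - L k₁) ≤ -m (L k₁ - m)`; while `ξ - v` is maximal we
have `v ≤ 0`, so that `2 ξ' ≤ -m L k₁` outweighs the growth of `-v`. Hence the norm decreases at a
constant rate until it vanishes. The argument tolerates all gains with
`2 (L² k₂ + w) < (L k₁)²`, because then some `m < L k₁` satisfies `2 (L² k₂ + w) < m L k₁`.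

*Existence.* Subtracting a primitive of `δ` from `e₂` leaves an upper hemicontinuous inclusion with
compact convex values and linear growth. Euler polygons for any selection converge along an
ultrafilter of step sizes to a locally Lipschitz function; its difference quotients are limits of
averages of nearby velocities, so its derivatives stay in the closed convex right-hand side.
-/

open Set Filter Topology Pointwise NNReal

section SignedPower

variable {x b : ℝ}

lemma spow_of_pos (hx : 0 < x) : spow x b = x ^ b := by
  rw [spow, Real.sign_of_pos hx, one_mul, abs_of_pos hx]

lemma spow_zero_left : spow 0 b = 0 := by
  rw [spow, Real.sign_zero, zero_mul]

lemma spow_neg : spow (-x) b = -spow x b := by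
  rw [spow, spow, Real.sign_neg, abs_neg, neg_mul]

lemma spow_pos (hx : 0 < x) : 0 < spow x b := by
  rw [spow_of_pos hx]
  exact Real.rpow_pos_of_pos hx b

lemma spow_nonneg (hx : 0 ≤ x) : 0 ≤ spow x b := by
  rcases hx.eq_or_lt with rfl | hx
  · exact spow_zero_left.ge
  · exact (spow_pos hx).le

lemma spow_eq_zero_iff : spow x b = 0 ↔ x = 0 := by
  refine ⟨fun h ↦ ?_, fun h ↦ h ▸ spow_zero_left⟩
  rcases lt_trichotomy x 0 with hx | hx | hx
  · have := spow_pos (b := b) (neg_pos.2 hx)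
    rw [spow_neg, h, neg_zero] at this
    exact this.false.elim
  · exact hx
  · exact ((spow_pos hx).ne' h).elim

lemma spow_eq_sub_max_rpow (hb : b ≠ 0) : spow x b = max x 0 ^ b - max (-x) 0 ^ b := by
  rcases lt_trichotomy x 0 with hx | rfl | hx
  · rw [← neg_neg x, spow_neg, spow_of_pos (neg_pos.2 hx), neg_neg, max_eq_right hx.le,
      max_eq_left (neg_pos.2 hx).le, Real.zero_rpow hb, zero_sub]
  · rw [neg_zero, sub_self, spow_zero_left]
  · rw [spow_of_pos hx, max_eq_left hx.le, max_eq_right (neg_neg_of_pos hx).le,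
      Real.zero_rpow hb, sub_zero]

lemma continuous_spow (hb : 0 < b) : Continuous (spow · b) := by
  simp_rw [spow_eq_sub_max_rpow hb.ne']
  exact ((Real.continuous_rpow_const hb.le).comp (continuous_id.max continuous_const)).sub
    ((Real.continuous_rpow_const hb.le).comp (continuous_neg.max continuous_const))

lemma abs_spow_le_one_add_abs (hb₀ : 0 ≤ b) (hb₁ : b ≤ 1) : |spow x b| ≤ 1 + |x| := by
  have hsign : |Real.sign x| ≤ 1 := by
    rcases Real.sign_apply_eq x with h | h | h <;> simp [h]
  calc |spow x b| = |Real.sign x| * |x| ^ b := by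
        rw [spow, abs_mul, abs_of_nonneg (Real.rpow_nonneg (abs_nonneg x) b)]
    _ ≤ 1 * (1 + |x|) ^ b := by gcongr; linarith
    _ ≤ 1 * (1 + |x|) ^ (1 : ℝ) := by gcongr; linarith [abs_nonneg x]
    _ = 1 + |x| := by rw [one_mul, Real.rpow_one]

lemma hasDerivAt_spow_half (hx : 0 < x) :
    HasDerivAt (spow · (1 / 2)) (1 / (2 * spow x (1 / 2))) x := by
  rw [spow_of_pos hx, ← Real.sqrt_eq_rpow]
  refine (Real.hasDerivAt_sqrt hx.ne').congr_of_eventuallyEq ?_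
  filter_upwards [lt_mem_nhds hx] with y hy
  rw [spow_of_pos hy, Real.sqrt_eq_rpow]

end SignedPower

section SetValuedSign

variable {a s : ℝ}

lemma Ssign_of_pos (ha : 0 < a) : Ssign a = {1} := if_pos ha

lemma Ssign_of_neg (ha : a < 0) : Ssign a = {-1} := by
  rw [Ssign, if_neg ha.not_gt, if_pos ha]

lemma Ssign_zero : Ssign 0 = Icc (-1) 1 := by
  rw [Ssign, if_neg (lt_irrefl 0), if_neg (lt_irrefl 0)]

lemma Ssign_eq_singleton_or_Icc (a : ℝ) : (∃ s ∈ Icc (-1 : ℝ) 1, Ssign a = {s}) ∨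
    Ssign a = Icc (-1) 1 := by
  rcases lt_trichotomy a 0 with ha | rfl | ha
  · exact .inl ⟨-1, by norm_num, Ssign_of_neg ha⟩
  · exact .inr Ssign_zero
  · exact .inl ⟨1, by norm_num, Ssign_of_pos ha⟩

lemma Ssign_subset_Icc : Ssign a ⊆ Icc (-1) 1 := by
  rcases Ssign_eq_singleton_or_Icc a with ⟨s, hs, h⟩ | h
  · exact h ▸ singleton_subset_iff.2 hs
  · exact h.le

lemma nonempty_Ssign : (Ssign a).Nonempty := by
  rcases Ssign_eq_singleton_or_Icc a with ⟨s, -, h⟩ | h <;> rw [h]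
  · exact singleton_nonempty s
  · exact nonempty_Icc.2 (by norm_num)

lemma convex_Ssign : Convex ℝ (Ssign a) := by
  rcases Ssign_eq_singleton_or_Icc a with ⟨s, -, h⟩ | h <;> rw [h]
  · exact convex_singleton s
  · exact convex_Icc _ _

lemma isCompact_Ssign : IsCompact (Ssign a) := by
  rcases Ssign_eq_singleton_or_Icc a with ⟨s, -, h⟩ | h <;> rw [h]
  · exact isCompact_singleton
  · exact isCompact_Icc

lemma neg_mem_Ssign_neg (hs : s ∈ Ssign a) : -s ∈ Ssign (-a) := by
  rcases lt_trichotomy a 0 with ha | rfl | ha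
  · rw [Ssign_of_neg ha, mem_singleton_iff] at hs
    rw [Ssign_of_pos (neg_pos.2 ha), hs, neg_neg, mem_singleton_iff]
  · rw [Ssign_zero] at hs
    rw [neg_zero, Ssign_zero]
    exact ⟨neg_le_neg hs.2, neg_le.1 hs.1⟩
  · rw [Ssign_of_pos ha, mem_singleton_iff] at hs
    rw [Ssign_of_neg (neg_neg_of_pos ha), hs, mem_singleton_iff]

lemma eventually_Ssign_subset (a : ℝ) : ∀ᶠ y in 𝓝 a, Ssign y ⊆ Ssign a := by
  rcases lt_trichotomy a 0 with ha | rfl | ha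
  · filter_upwards [gt_mem_nhds ha] with y hy
    rw [Ssign_of_neg ha, Ssign_of_neg hy]
  · exact .of_forall fun y ↦ Ssign_zero ▸ Ssign_subset_Icc
  · filter_upwards [lt_mem_nhds ha] with y hy
    rw [Ssign_of_pos ha, Ssign_of_pos hy]

end SetValuedSign

/-- The upper right Dini derivative of `f` at `t` is at most `d`; stated through bounds on the
slopes, because the limit superior itself may be infinite. -/
def DiniLE (f : ℝ → ℝ) (d t : ℝ) : Prop :=
  ∀ r, d < r → ∀ᶠ s in 𝓝[>] t, slope f t s < r

namespace DiniLE

variable {f g : ℝ → ℝ} {c d r t M : ℝ}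

lemma of_hasDerivWithinAt (hf : HasDerivWithinAt f c (Ioi t) t) (hcd : c ≤ d) : DiniLE f d t :=
  fun _ hr ↦ ((hasDerivWithinAt_iff_tendsto_slope' self_notMem_Ioi).1 hf).eventually_lt_const
    (hcd.trans_lt hr)

lemma of_eventually_slope_le (hf : ∀ᶠ s in 𝓝[>] t, slope f t s ≤ d) : DiniLE f d t :=
  fun _ hr ↦ hf.mono fun _ hs ↦ hs.trans_lt hr

lemma mono (hf : DiniLE f c t) (hcd : c ≤ d) : DiniLE f d t :=
  fun r hr ↦ hf r (hcd.trans_lt hr)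

protected lemma add (hf : DiniLE f c t) (hg : DiniLE g d t) : DiniLE (f + g) (c + d) t := by
  intro r hr
  filter_upwards [hf (c + (r - c - d) / 2) (by linarith), hg (d + (r - c - d) / 2) (by linarith)]
    with s hfs hgs
  have : slope (f + g) t s = slope f t s + slope g t s := by
    simp only [slope_def_field, Pi.add_apply]
    ring
  linarith

lemma congr (hf : DiniLE f d t) (hfg : f =ᶠ[𝓝[>] t] g) (ht : f t = g t) : DiniLE g d t := by
  intro r hr
  filter_upwards [hf r hr, hfg] with s hs hsg
  rwa [slope_def_field, ← hsg, ← ht, ← slope_def_field]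

lemma eventually_lt (hf : DiniLE f d t) (hdr : d < r) :
    ∀ᶠ s in 𝓝[>] t, f s < f t + r * (s - t) := by
  filter_upwards [hf r hdr, self_mem_nhdsWithin] with s hs hts
  rw [slope_def_field, div_lt_iff₀ (sub_pos.2 hts)] at hs
  linarith

/-- A branch lying strictly below `M` at `t` stays below the line by continuity, so that its
growth rate is irrelevant. -/
lemma eventually_lt_of_le (hc : ContinuousWithinAt f (Ioi t) t) (hM : f t ≤ M)
    (hf : M ≤ f t → DiniLE f d t) (hdr : d < r) : ∀ᶠ s in 𝓝[>] t, f s < M + r * (s - t) := by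
  rcases hM.lt_or_eq with hlt | rfl
  · refine hc.tendsto.eventually_lt ?_ hlt
    have : ContinuousWithinAt (fun s ↦ M + r * (s - t)) (Ioi t) t := by fun_prop
    simpa only [sub_self, mul_zero, add_zero] using this.tendsto
  · exact (hf le_rfl).eventually_lt hdr

protected lemma max (hfc : ContinuousWithinAt f (Ioi t) t) (hgc : ContinuousWithinAt g (Ioi t) t)
    (hf : g t ≤ f t → DiniLE f d t) (hg : f t ≤ g t → DiniLE g d t) :
    DiniLE (fun s ↦ max (f s) (g s)) d t := by
  intro r hr
  filter_upwards [eventually_lt_of_le hfc (le_max_left _ _) (fun h ↦ hf (max_le_iff.1 h).2) hr,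
    eventually_lt_of_le hgc (le_max_right _ _) (fun h ↦ hg (max_le_iff.1 h).1) hr,
    self_mem_nhdsWithin] with s hfs hgs hts
  rw [slope_def_field, div_lt_iff₀ (sub_pos.2 hts), sub_lt_iff_lt_add']
  exact max_lt hfs hgs

end DiniLE

section FiniteTimeDecay

variable {V : ℝ → ℝ} {c : ℝ}

lemma le_max_sub_mul_of_diniLE (hc : 0 < c) (hV : ContinuousOn V (Ici 0))
    (hdecay : ∀ t, 0 ≤ t → 0 < V t → DiniLE V (-c) t) {ε T : ℝ} (hε : 0 < ε) (hT : 0 ≤ T) :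
    V T ≤ max (V 0 - c / 2 * T) ε := by
  have hbound : Continuous fun t ↦ max (V 0 - c / 2 * t) ε := by fun_prop
  have hclosed : IsClosed ({t | V t ≤ max (V 0 - c / 2 * t) ε} ∩ Icc 0 T) := by
    rw [inter_comm]
    exact isClosed_Icc.isClosed_le (hV.mono Icc_subset_Ici_self) hbound.continuousOn
  refine hclosed.Icc_subset_of_forall_mem_nhdsWithin (by simp) (fun t ht ↦ ?_) ⟨hT, le_rfl⟩
  obtain ⟨htV, ht₀, -⟩ := ht
  rcases (show V t ≤ max (V 0 - c / 2 * t) ε from htV).lt_or_eq with hlt | heq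
  · have hVt : ContinuousWithinAt V (Ioi t) t := (hV t ht₀).mono fun s hs ↦ ht₀.trans hs.le
    filter_upwards [hVt.tendsto.eventually_lt hbound.continuousWithinAt.tendsto hlt] with s hs
      using hs.le
  · have hVpos : 0 < V t := heq ▸ lt_max_of_lt_right hε
    filter_upwards [(hdecay t ht₀ hVpos).eventually_lt (by linarith : -c < -(c / 2)),
      self_mem_nhdsWithin] with s hs hts
    have hts : t < s := hts
    refine hs.le.trans ?_
    rw [heq, ← max_add_add_right]
    gcongr
    · linarith
    · nlinarith

lemma exists_forall_eq_zero_of_diniLE (hc : 0 < c) (hV : ContinuousOn V (Ici 0))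
    (hV₀ : ∀ t, 0 ≤ V t) (hdecay : ∀ t, 0 ≤ t → 0 < V t → DiniLE V (-c) t) :
    ∃ T ≥ 0, ∀ t ≥ T, V t = 0 := by
  have hT : 0 ≤ 2 * V 0 / c := by have := hV₀ 0; positivity
  refine ⟨2 * V 0 / c, hT, fun t ht ↦ le_antisymm (le_of_forall_gt_imp_ge_of_dense
    fun ε hε ↦ ?_) (hV₀ t)⟩
  have hexpired : V 0 - c / 2 * t ≤ 0 := by
    rw [ge_iff_le, div_le_iff₀ hc] at ht
    linarith
  exact (le_max_sub_mul_of_diniLE hc hV hdecay hε (hT.trans ht)).trans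
    (max_le (hexpired.trans hε.le) le_rfl)

end FiniteTimeDecay

section Primitive

variable {E : Type*} [NormedAddCommGroup E] [NormedSpace ℝ E] {f f' : ℝ → E}

lemma continuousOn_of_eq_add_integral (hf' : ∀ t, 0 ≤ t → IntervalIntegrable f' volume 0 t)
    (hf : ∀ t, 0 ≤ t → f t = f 0 + ∫ u in (0 : ℝ)..t, f' u) : ContinuousOn f (Ici 0) := by
  intro t ht
  have ht1 : (0 : ℝ) ≤ t + 1 := by linarith [mem_Ici.1 ht]
  have hprim : ContinuousOn (fun s ↦ f 0 + ∫ u in (0 : ℝ)..s, f' u) (Icc 0 (t + 1)) := by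
    rw [← uIcc_of_le ht1]
    exact continuousOn_const.add
      (intervalIntegral.continuousOn_primitive_interval' (hf' _ ht1) left_mem_uIcc)
  refine ((hprim.congr fun s hs ↦ hf s hs.1) t ⟨ht, by linarith⟩).mono_of_mem_nhdsWithin ?_
  filter_upwards [self_mem_nhdsWithin, mem_nhdsWithin_of_mem_nhds (Iic_mem_nhds (lt_add_one t))]
    with s hs₀ hst using ⟨hs₀, hst⟩

lemma sub_eq_integral_of_eq_add_integral
    (hf' : ∀ t, 0 ≤ t → IntervalIntegrable f' volume 0 t)
    (hf : ∀ t, 0 ≤ t → f t = f 0 + ∫ u in (0 : ℝ)..t, f' u) {s t : ℝ} (hs : 0 ≤ s) (ht : 0 ≤ t) :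
    f t - f s = ∫ u in s..t, f' u := by
  rw [hf t ht, hf s hs, add_sub_add_left_eq_sub,
    intervalIntegral.integral_interval_sub_left (hf' t ht) (hf' s hs)]

lemma slope_mem_of_eq_add_integral [CompleteSpace E]
    (hf' : ∀ t, 0 ≤ t → IntervalIntegrable f' volume 0 t)
    (hf : ∀ t, 0 ≤ t → f t = f 0 + ∫ u in (0 : ℝ)..t, f' u) {C : Set E} (hC : Convex ℝ C)
    (hCc : IsClosed C) {s t : ℝ} (hs : 0 ≤ s) (hst : s < t)
    (hmem : ∀ᵐ u, u ∈ Ioc s t → f' u ∈ C) : slope f s t ∈ C := by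
  have ht := hs.trans hst.le
  have hslope : slope f s t = ⨍ u in Ioc s t, f' u := by
    rw [slope_def_module, sub_eq_integral_of_eq_add_integral hf' hf hs ht, ← uIoc_of_le hst.le,
      interval_average_eq]
  rw [hslope]
  refine hC.set_average_mem hCc ?_ measure_Ioc_lt_top.ne
    ((ae_restrict_iff' measurableSet_Ioc).2 hmem) ?_
  · rw [Real.volume_Ioc]
    exact (ENNReal.ofReal_pos.2 (sub_pos.2 hst)).ne'
  · exact (((hf' s hs).symm.trans (hf' t ht)).1)

lemma hasDerivWithinAt_Ioi_of_eq_add_integral [CompleteSpace E] {g : ℝ → E}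
    (hf : ∀ t, 0 ≤ t → f t = f 0 + ∫ u in (0 : ℝ)..t, f' u)
    (hfg : ∀ᵐ t, 0 ≤ t → f' t = g t) (hg : ContinuousOn g (Ici 0)) {t : ℝ} (ht : 0 ≤ t) :
    HasDerivWithinAt f (g t) (Ioi t) t := by
  have hfg_on : ∀ s, 0 ≤ s → ∀ᵐ u, u ∈ uIoc 0 s → f' u = g u := fun s hs ↦ by
    filter_upwards [hfg] with u hu hus
    exact hu (uIoc_of_le hs ▸ hus).1.le
  have hgint : IntervalIntegrable g volume 0 t :=
    (hg.mono (uIcc_of_le ht ▸ Icc_subset_Ici_self)).intervalIntegrable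
  have hgt : ContinuousOn g (Ici t) := hg.mono (Ici_subset_Ici.2 ht)
  have hprim : HasDerivWithinAt (fun s ↦ f 0 + ∫ u in (0 : ℝ)..s, g u) (g t) (Ioi t) t :=
    ((intervalIntegral.integral_hasDerivWithinAt_right hgint
      ((hgt.mono Ioi_subset_Ici_self).stronglyMeasurableAtFilter_nhdsWithin measurableSet_Ioi t)
      ((hgt t self_mem_Ici).mono Ioi_subset_Ici_self) (s := Ici t)).mono
        Ioi_subset_Ici_self).const_add _
  refine hprim.congr (fun s hs ↦ ?_) ?_
  · have hs₀ : 0 ≤ s := ht.trans (mem_Ioi.1 hs).le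
    rw [hf s hs₀, intervalIntegral.integral_congr_ae (hfg_on s hs₀)]
  · rw [hf t ht, intervalIntegral.integral_congr_ae (hfg_on t ht)]

end Primitive

namespace IsSol2

variable {k₁ k₂ L w : ℝ} {δ e₁ e₂ e₁' e₂' : ℝ → ℝ} {t : ℝ}

lemma neg (h : IsSol2 k₁ k₂ L δ e₁ e₂ e₁' e₂') :
    IsSol2 k₁ k₂ L (-δ) (-e₁) (-e₂) (-e₁') (-e₂') := by
  obtain ⟨hint, h₁, h₂, hincl⟩ := h
  refine ⟨fun s t hs hst ↦ ⟨(hint s t hs hst).1.neg, (hint s t hs hst).2.neg⟩, fun t ht ↦ ?_,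
    fun t ht ↦ ?_, ?_⟩
  · simp only [Pi.neg_apply, intervalIntegral.integral_neg, h₁ t ht, neg_add]
  · simp only [Pi.neg_apply, intervalIntegral.integral_neg, h₂ t ht, neg_add]
  · filter_upwards [hincl] with t ht ht₀
    obtain ⟨he₁, s, hs, he₂⟩ := ht ht₀
    refine ⟨?_, -s, neg_mem_Ssign_neg hs, ?_⟩
    · simp only [Pi.neg_apply, he₁, spow_neg]
      ring
    · simp only [Pi.neg_apply, he₂]
      ring

lemma continuousOn_fst (h : IsSol2 k₁ k₂ L δ e₁ e₂ e₁' e₂') : ContinuousOn e₁ (Ici 0) :=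
  continuousOn_of_eq_add_integral (fun t ht ↦ (h.1 0 t le_rfl ht).1) h.2.1

lemma continuousOn_snd (h : IsSol2 k₁ k₂ L δ e₁ e₂ e₁' e₂') : ContinuousOn e₂ (Ici 0) :=
  continuousOn_of_eq_add_integral (fun t ht ↦ (h.1 0 t le_rfl ht).2) h.2.2.1

lemma hasDerivWithinAt_fst (h : IsSol2 k₁ k₂ L δ e₁ e₂ e₁' e₂') (ht : 0 ≤ t) :
    HasDerivWithinAt e₁ (e₂ t - L * k₁ * spow (e₁ t) (1 / 2)) (Ioi t) t := by
  have hrhs : ContinuousOn (fun t ↦ e₂ t - L * k₁ * spow (e₁ t) (1 / 2)) (Ici 0) :=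
    h.continuousOn_snd.sub (continuousOn_const.mul
      ((continuous_spow one_half_pos).comp_continuousOn h.continuousOn_fst))
  exact hasDerivWithinAt_Ioi_of_eq_add_integral h.2.1
    (h.2.2.2.mono fun t ht ht₀ ↦ (ht ht₀).1) hrhs ht

lemma eventually_fst_pos (h : IsSol2 k₁ k₂ L δ e₁ e₂ e₁' e₂') (ht : 0 ≤ t)
    (hpos : 0 < e₁ t ∨ e₁ t = 0 ∧ 0 < e₂ t) : ∀ᶠ s in 𝓝[>] t, 0 < e₁ s := by
  rcases hpos with he₁ | ⟨he₁, he₂⟩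
  · exact (h.hasDerivWithinAt_fst ht).continuousWithinAt.tendsto.eventually_const_lt he₁
  · have hderiv := h.hasDerivWithinAt_fst ht
    rw [he₁, spow_zero_left, mul_zero, sub_zero,
      hasDerivWithinAt_iff_tendsto_slope' self_notMem_Ioi] at hderiv
    filter_upwards [hderiv.eventually_const_lt he₂, self_mem_nhdsWithin] with s hs hts
    rw [slope_def_field, he₁, sub_zero] at hs
    exact (div_pos_iff_of_pos_right (sub_pos.2 hts)).1 hs

lemma eventually_slope_snd_mem (h : IsSol2 k₁ k₂ L δ e₁ e₂ e₁' e₂') (hδ : ∀ t, |δ t| ≤ w)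
    (ht : 0 ≤ t) (hpos : 0 < e₁ t ∨ e₁ t = 0 ∧ 0 < e₂ t) :
    ∀ᶠ s in 𝓝[>] t, slope e₂ t s ∈ Icc (-w - L ^ 2 * k₂) (w - L ^ 2 * k₂) := by
  obtain ⟨b, hb, hpos⟩ := (nhdsGT_basis t).eventually_iff.1 (h.eventually_fst_pos ht hpos)
  filter_upwards [Ioo_mem_nhdsGT hb] with s hs
  refine slope_mem_of_eq_add_integral (fun t ht ↦ (h.1 0 t le_rfl ht).2) h.2.2.1
    (convex_Icc _ _) isClosed_Icc ht hs.1 ?_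
  filter_upwards [h.2.2.2] with u hu hus
  obtain ⟨-, σ, hσ, he₂⟩ := hu (ht.trans hus.1.le)
  rw [Ssign_of_pos (hpos ⟨hus.1, hus.2.trans_lt hs.2⟩), mem_singleton_iff] at hσ
  have := abs_le.1 (hδ u)
  rw [he₂, hσ, mul_one]
  exact ⟨by linarith, by linarith⟩

end IsSol2

/-- A Lyapunov function for the error dynamics: the hexagonal norm
`‖(ξ, v)‖ = max |v| (max |ξ| |ξ - v|)` evaluated at `ξ = m ⌈x⌋^{1/2}`. -/
noncomputable def lyapunov (m x v : ℝ) : ℝ :=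
  max |v| (max |m * spow x (1 / 2)| |m * spow x (1 / 2) - v|)

section Lyapunov

variable {m x v : ℝ}

lemma lyapunov_nonneg : 0 ≤ lyapunov m x v := le_max_of_le_left (abs_nonneg v)

lemma lyapunov_neg_neg : lyapunov m (-x) (-v) = lyapunov m x v := by
  simp only [lyapunov, spow_neg, mul_neg, abs_neg, neg_sub_neg, abs_sub_comm v]

lemma lyapunov_eq_zero_iff (hm : m ≠ 0) : lyapunov m x v = 0 ↔ x = 0 ∧ v = 0 := by
  refine ⟨fun h ↦ ?_, ?_⟩
  · obtain ⟨hv, hrest⟩ := max_le_iff.1 h.le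
    have hx := abs_nonpos_iff.1 (max_le_iff.1 hrest).1
    exact ⟨spow_eq_zero_iff.1 ((mul_eq_zero.1 hx).resolve_left hm), abs_nonpos_iff.1 hv⟩
  · rintro ⟨rfl, rfl⟩
    simp [lyapunov, spow_zero_left]

lemma lyapunov_of_nonneg (hm : 0 ≤ m) (hx : 0 ≤ x) :
    lyapunov m x v = max v (max (m * spow x (1 / 2)) (m * spow x (1 / 2) - v)) := by
  have hξ : 0 ≤ m * spow x (1 / 2) := mul_nonneg hm (spow_nonneg hx)
  rw [lyapunov, abs_of_nonneg hξ]
  grind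

lemma continuous_lyapunov : Continuous fun p : ℝ × ℝ ↦ lyapunov m p.1 p.2 := by
  have := continuous_spow one_half_pos
  unfold lyapunov
  fun_prop

end Lyapunov

namespace IsSol2

variable {k₁ k₂ L w m c : ℝ} {δ e₁ e₂ e₁' e₂' : ℝ → ℝ} {t : ℝ}

lemma hasDerivWithinAt_spow_fst (h : IsSol2 k₁ k₂ L δ e₁ e₂ e₁' e₂') (ht : 0 ≤ t)
    (he₁ : 0 < e₁ t) :
    HasDerivWithinAt (fun s ↦ spow (e₁ s) (1 / 2))
      ((e₂ t / spow (e₁ t) (1 / 2) - L * k₁) / 2) (Ioi t) t := by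
  refine ((hasDerivAt_spow_half he₁).comp_hasDerivWithinAt t
    (h.hasDerivWithinAt_fst ht)).congr_deriv ?_
  have := spow_pos (b := 1 / 2) he₁
  field_simp

lemma diniLE_mul_spow_fst (h : IsSol2 k₁ k₂ L δ e₁ e₂ e₁' e₂') (ht : 0 ≤ t) (he₁ : 0 < e₁ t)
    (hm : 0 ≤ m) {r : ℝ} (hr : e₂ t ≤ r * spow (e₁ t) (1 / 2)) :
    DiniLE (fun s ↦ m * spow (e₁ s) (1 / 2)) (m * ((r - L * k₁) / 2)) t := by
  refine .of_hasDerivWithinAt ((h.hasDerivWithinAt_spow_fst ht he₁).const_mul m) ?_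
  gcongr
  exact (div_le_iff₀ (spow_pos he₁)).2 hr

lemma diniLE_snd (h : IsSol2 k₁ k₂ L δ e₁ e₂ e₁' e₂') (hδ : ∀ t, |δ t| ≤ w) (ht : 0 ≤ t)
    (hpos : 0 < e₁ t ∨ e₁ t = 0 ∧ 0 < e₂ t) : DiniLE e₂ (w - L ^ 2 * k₂) t :=
  .of_eventually_slope_le ((h.eventually_slope_snd_mem hδ ht hpos).mono fun _ hs ↦ hs.2)

lemma diniLE_neg_snd (h : IsSol2 k₁ k₂ L δ e₁ e₂ e₁' e₂') (hδ : ∀ t, |δ t| ≤ w) (ht : 0 ≤ t)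
    (hpos : 0 < e₁ t ∨ e₁ t = 0 ∧ 0 < e₂ t) : DiniLE (-e₂) (L ^ 2 * k₂ + w) t := by
  refine .of_eventually_slope_le ((h.eventually_slope_snd_mem hδ ht hpos).mono fun s hs ↦ ?_)
  rw [slope_neg_fun, Pi.neg_apply, Pi.neg_apply]
  linarith [hs.1]

/-- Along a piece of trajectory with `0 < e₁`, each of the three faces of the hexagon decreases
at rate `c` at the times at which it is active. -/
lemma diniLE_lyapunov_of_pos (h : IsSol2 k₁ k₂ L δ e₁ e₂ e₁' e₂') (hδ : ∀ t, |δ t| ≤ w)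
    (hm : 0 ≤ m) (hc : c ≤ L ^ 2 * k₂ - w) (hcm : 2 * c ≤ m * (L * k₁ - m))
    (hcK : 2 * (c + (L ^ 2 * k₂ + w)) ≤ m * (L * k₁)) (ht : 0 ≤ t)
    (hpos : 0 < e₁ t ∨ e₁ t = 0 ∧ 0 < e₂ t) :
    DiniLE (fun s ↦ lyapunov m (e₁ s) (e₂ s)) (-c) t := by
  have hsub : Ioi t ⊆ Ici 0 := fun s hs ↦ ht.trans (mem_Ioi.1 hs).le
  have hcont₂ : ContinuousWithinAt e₂ (Ioi t) t := (h.continuousOn_snd t ht).mono hsub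
  have hcontξ : ContinuousWithinAt (fun s ↦ m * spow (e₁ s) (1 / 2)) (Ioi t) t :=
    continuousWithinAt_const.mul
      (((continuous_spow one_half_pos).comp_continuousOn h.continuousOn_fst t ht).mono hsub)
  have hface : DiniLE (fun s ↦ max (e₂ s)
      (max (m * spow (e₁ s) (1 / 2)) (m * spow (e₁ s) (1 / 2) - e₂ s))) (-c) t := by
    refine .max hcont₂ (hcontξ.max (hcontξ.sub hcont₂))
      (fun _ ↦ (h.diniLE_snd hδ ht hpos).mono (by linarith)) fun hactive ↦ ?_
    have he₁ : 0 < e₁ t := hpos.resolve_right fun ⟨he₁, he₂⟩ ↦ by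
      rw [he₁, spow_zero_left, mul_zero, zero_sub, max_eq_left (by linarith)] at hactive
      linarith
    refine .max hcontξ (hcontξ.sub hcont₂) (fun hξ ↦ ?_) fun hξ ↦ ?_
    · rw [max_eq_left hξ] at hactive
      exact (h.diniLE_mul_spow_fst ht he₁ hm hactive).mono (by linarith)
    · have he₂ : e₂ t ≤ 0 * spow (e₁ t) (1 / 2) := by linarith
      exact ((h.diniLE_mul_spow_fst ht he₁ hm he₂).add (h.diniLE_neg_snd hδ ht hpos)).mono
        (by linarith)
  have hnonneg : 0 ≤ e₁ t := hpos.elim le_of_lt fun h ↦ h.1.ge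
  refine hface.congr ?_ (lyapunov_of_nonneg hm hnonneg).symm
  filter_upwards [h.eventually_fst_pos ht hpos] with s hs
  rw [lyapunov_of_nonneg hm hs.le]

lemma diniLE_lyapunov (h : IsSol2 k₁ k₂ L δ e₁ e₂ e₁' e₂') (hδ : ∀ t, |δ t| ≤ w)
    (hm : 0 < m) (hc : c ≤ L ^ 2 * k₂ - w) (hcm : 2 * c ≤ m * (L * k₁ - m))
    (hcK : 2 * (c + (L ^ 2 * k₂ + w)) ≤ m * (L * k₁)) (ht : 0 ≤ t)
    (hpos : 0 < lyapunov m (e₁ t) (e₂ t)) :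
    DiniLE (fun s ↦ lyapunov m (e₁ s) (e₂ s)) (-c) t := by
  have hne : ¬(e₁ t = 0 ∧ e₂ t = 0) := fun h₀ ↦ hpos.ne' ((lyapunov_eq_zero_iff hm.ne').2 h₀)
  have hcases : (0 < e₁ t ∨ e₁ t = 0 ∧ 0 < e₂ t) ∨
      (0 < (-e₁) t ∨ (-e₁) t = 0 ∧ 0 < (-e₂) t) := by
    grind [Pi.neg_apply]
  rcases hcases with hright | hleft
  · exact h.diniLE_lyapunov_of_pos hδ hm.le hc hcm hcK ht hright
  · have hδ' : ∀ t, |(-δ) t| ≤ w := fun t ↦ (abs_neg (δ t)).trans_le (hδ t)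
    simpa only [Pi.neg_apply, lyapunov_neg_neg] using
      h.neg.diniLE_lyapunov_of_pos hδ' hm.le hc hcm hcK ht hleft

lemma exists_forall_eq_zero (h : IsSol2 k₁ k₂ L δ e₁ e₂ e₁' e₂') (hδ : ∀ t, |δ t| ≤ w)
    (hK : 0 < L * k₁) (hgain : 2 * (L ^ 2 * k₂ + w) < (L * k₁) ^ 2) (hw : w < L ^ 2 * k₂) :
    ∃ T ≥ (0 : ℝ), ∀ t ≥ T, e₁ t = 0 ∧ e₂ t = 0 := by
  have hw₀ : 0 ≤ w := (abs_nonneg (δ 0)).trans (hδ 0)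
  -- Decay needs `0 < m < L k₁` and `2 (L² k₂ + w) < m L k₁`.
  obtain ⟨m, hm₁, hm₂⟩ : ∃ m, 2 * (L ^ 2 * k₂ + w) / (L * k₁) < m ∧ m < L * k₁ :=
    exists_between ((div_lt_iff₀ hK).2 (by linarith))
  have hm : 0 < m := lt_of_le_of_lt (by have := hw₀.trans hw.le; positivity) hm₁
  rw [div_lt_iff₀ hK] at hm₁
  have hrate : 0 < m * (L * k₁ - m) := mul_pos hm (sub_pos.2 hm₂)
  obtain ⟨c, hc₀, hc⟩ := exists_between (show 0 < min (L ^ 2 * k₂ - w) (min (m * (L * k₁ - m) / 2)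
    (m * (L * k₁) / 2 - (L ^ 2 * k₂ + w))) from
      lt_min (by linarith) (lt_min (by linarith) (by linarith)))
  simp only [lt_min_iff] at hc
  obtain ⟨T, hT, hzero⟩ := exists_forall_eq_zero_of_diniLE hc₀
    (continuous_lyapunov.comp_continuousOn (h.continuousOn_fst.prodMk h.continuousOn_snd))
    (fun t ↦ lyapunov_nonneg (m := m))
    fun t ht hpos ↦ h.diniLE_lyapunov hδ hm (by linarith) (by linarith) (by linarith) ht hpos
  exact ⟨T, hT, fun t ht ↦ (lyapunov_eq_zero_iff hm.ne').1 (hzero t ht)⟩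

end IsSol2

section EulerPolygon

variable {E : Type*} [NormedAddCommGroup E] [NormedSpace ℝ E]

/-- The `n`-th node of the Euler polygon of `u' = f (t, u)`, `u 0 = a`, with step `h`; it
approximates `u (n * h)`. -/
def eulerNode (f : ℝ × E → E) (a : E) (h : ℝ) : ℕ → E
  | 0 => a
  | n + 1 => eulerNode f a h n + h • f (n * h, eulerNode f a h n)

/-- `u` is the pointwise limit along `l` of the piecewise constant Euler approximations
`t ↦ eulerNode f a h ⌊t / h⌋₊`, as functions of the step `h`. -/
def IsEulerLimit (f : ℝ × E → E) (a : E) (l : Filter ℝ) (u : ℝ → E) : Prop :=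
  ∀ t, Tendsto (fun h ↦ eulerNode f a h ⌊t / h⌋₊) l (𝓝 (u t))

variable {f : ℝ × E → E} {a : E} {h s t T : ℝ} {l : Filter ℝ}

lemma one_add_norm_eulerNode_le {M : ℝ} (hf : ∀ t ∈ Icc 0 T, ∀ y, ‖f (t, y)‖ ≤ M * (1 + ‖y‖))
    (hh : 0 ≤ h) {n : ℕ} (hn : n * h ≤ T) :
    1 + ‖eulerNode f a h n‖ ≤ Real.exp (M * (n * h)) * (1 + ‖a‖) := by
  induction n with
  | zero => simp [eulerNode]
  | succ n ih =>
    push_cast at hn ⊢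
    have hn' : n * h ≤ T := by linarith
    calc 1 + ‖eulerNode f a h (n + 1)‖
        ≤ 1 + (‖eulerNode f a h n‖ + h * ‖f (n * h, eulerNode f a h n)‖) := by
          grw [eulerNode, norm_add_le, norm_smul_of_nonneg hh]
      _ ≤ 1 + (‖eulerNode f a h n‖ + h * (M * (1 + ‖eulerNode f a h n‖))) := by
          grw [hf _ ⟨by positivity, hn'⟩]
      _ = (M * h + 1) * (1 + ‖eulerNode f a h n‖) := by ring
      _ ≤ Real.exp (M * h) * (Real.exp (M * (n * h)) * (1 + ‖a‖)) := by
          gcongr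
          · exact Real.add_one_le_exp _
          · exact ih hn'
      _ = Real.exp (M * ((n + 1) * h)) * (1 + ‖a‖) := by
          rw [← mul_assoc, ← Real.exp_add]
          ring_nf

lemma exists_eulerNode_bound (a : E)
    (hf : ∃ M, ∀ t ∈ Icc 0 T, ∀ y, ‖f (t, y)‖ ≤ M * (1 + ‖y‖)) :
    ∃ C : ℝ≥0, ∀ h, 0 ≤ h → ∀ n : ℕ, n * h ≤ T →
      ‖eulerNode f a h n‖ ≤ C ∧ ‖f (n * h, eulerNode f a h n)‖ ≤ C := by
  obtain ⟨M, hM⟩ := hf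
  let B := Real.exp (|M| * T) * (1 + ‖a‖)
  have hB : 0 ≤ B := by positivity
  refine ⟨.mk ((1 + |M|) * B) (by positivity), fun h hh n hn ↦ ?_⟩
  have hf' : ∀ t ∈ Icc 0 T, ∀ y, ‖f (t, y)‖ ≤ |M| * (1 + ‖y‖) := fun t ht y ↦
    (hM t ht y).trans (by gcongr; exact le_abs_self M)
  have hU : 1 + ‖eulerNode f a h n‖ ≤ B :=
    (one_add_norm_eulerNode_le hf' hh hn).trans (by unfold B; gcongr)
  rw [NNReal.coe_mk]
  refine ⟨by nlinarith [abs_nonneg M], (hf' _ ⟨by positivity, hn⟩ _).trans ?_⟩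
  nlinarith [abs_nonneg M]

lemma dist_eulerNode_le {C : ℝ} (hh : 0 ≤ h) {i j : ℕ} (hij : i ≤ j)
    (hf : ∀ n < j, ‖f (n * h, eulerNode f a h n)‖ ≤ C) :
    dist (eulerNode f a h i) (eulerNode f a h j) ≤ C * (j * h - i * h) := by
  calc dist (eulerNode f a h i) (eulerNode f a h j) ≤ ∑ _n ∈ Finset.Ico i j, h * C :=
        dist_le_Ico_sum_of_dist_le hij fun {n} _ hn ↦ by
          grw [eulerNode, dist_self_add_right, norm_smul_of_nonneg hh, hf n hn]
    _ = C * (j * h - i * h) := by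
        rw [Finset.sum_const, Nat.card_Ico, nsmul_eq_mul, Nat.cast_sub hij]
        ring

lemma inv_smul_eulerNode_sub_mem {C : Set E} (hC : Convex ℝ C) (hh : 0 < h) {i j : ℕ}
    (hij : i < j) (hf : ∀ n ∈ Ico i j, f (n * h, eulerNode f a h n) ∈ C) :
    (j * h - i * h)⁻¹ • (eulerNode f a h j - eulerNode f a h i) ∈ C := by
  have hlen : 0 < (j * h - i * h) := sub_pos.2 (by gcongr)
  rw [← Finset.sum_Ico_sub _ hij.le, Finset.smul_sum]
  simp only [eulerNode, add_sub_cancel_left, smul_smul]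
  refine hC.sum_mem (fun _ _ ↦ by positivity) ?_ fun n hn ↦ hf n (Finset.mem_Ico.1 hn)
  rw [Finset.sum_const, Nat.card_Ico, nsmul_eq_mul, Nat.cast_sub hij.le]
  rw [mul_left_comm, sub_mul, inv_mul_cancel₀ hlen.ne']

lemma floor_div_mul_le (hh : 0 < h) (ht : 0 ≤ t) : ⌊t / h⌋₊ * h ≤ t :=
  (le_div_iff₀ hh).1 (Nat.floor_le (by positivity))

lemma mul_le_of_lt_floor_div (hh : 0 < h) {n : ℕ} (hn : n < ⌊t / h⌋₊) : n * h ≤ t :=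
  (le_div_iff₀ hh).1 (Nat.lt_of_lt_floor hn).le

lemma tendsto_floor_div_mul (ht : 0 ≤ t) :
    Tendsto (fun h ↦ ⌊t / h⌋₊ * h) (𝓝[>] 0) (𝓝 t) := by
  simpa [Function.comp_def, div_eq_mul_inv] using
    (tendsto_nat_floor_mul_div_atTop ht).comp tendsto_inv_nhdsGT_zero

lemma exists_isEulerLimit [ProperSpace E] (a : E)
    (hf : ∀ T, ∃ M, ∀ t ∈ Icc 0 T, ∀ y, ‖f (t, y)‖ ≤ M * (1 + ‖y‖)) (l : Ultrafilter ℝ)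
    (hl : ↑l ≤ 𝓝[>] (0 : ℝ)) : ∃ u, IsEulerLimit f a l u := by
  have hlim (t : ℝ) : ∃ x, Tendsto (fun h ↦ eulerNode f a h ⌊t / h⌋₊) l (𝓝 x) := by
    obtain ⟨C, hC⟩ := exists_eulerNode_bound a (hf (max t 0))
    have hbound : ∀ᶠ h in l, eulerNode f a h ⌊t / h⌋₊ ∈ Metric.closedBall 0 (C : ℝ) := by
      filter_upwards [hl self_mem_nhdsWithin] with h hh
      have hh : 0 < h := hh
      rw [mem_closedBall_zero_iff]
      refine (hC h hh.le _ ?_).1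
      grw [← floor_div_mul_le hh (le_max_right t 0), ← le_max_left t 0]
    obtain ⟨x, -, hx⟩ := (isCompact_closedBall (0 : E) (C : ℝ)).ultrafilter_le_nhds
      (l.map fun h ↦ eulerNode f a h ⌊t / h⌋₊) (le_principal_iff.2 hbound)
    exact ⟨x, hx⟩
  choose u hu using hlim
  exact ⟨u, hu⟩

namespace IsEulerLimit

variable {u : ℝ → E}

lemma eventually_eulerNode_mem (hu : IsEulerLimit f a l u) (hl : l ≤ 𝓝[>] 0)
    (hf : ∀ T, ∃ M, ∀ t ∈ Icc 0 T, ∀ y, ‖f (t, y)‖ ≤ M * (1 + ‖y‖)) (ht : 0 ≤ t)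
    {N : Set (ℝ × E)} (hN : N ∈ 𝓝 (t, u t)) :
    ∀ᶠ s in 𝓝[>] t, ∀ᶠ h in l, ∀ n ∈ Ico ⌊t / h⌋₊ ⌊s / h⌋₊, (n * h, eulerNode f a h n) ∈ N := by
  obtain ⟨ε, hε, hball⟩ := Metric.mem_nhds_iff.1 hN
  obtain ⟨C, hC⟩ := exists_eulerNode_bound a (hf (t + 1))
  have hsmall : ∀ᶠ s in 𝓝 t, C * (s - t) < ε :=
    (by fun_prop : Continuous fun s ↦ C * (s - t)).tendsto' t 0 (by simp) |>.eventually_lt_const hε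
  filter_upwards [mem_nhdsWithin_of_mem_nhds hsmall,
    mem_nhdsWithin_of_mem_nhds (Iio_mem_nhds (lt_add_one t)),
    mem_nhdsWithin_of_mem_nhds (Iio_mem_nhds (lt_add_of_pos_right t hε))] with s hsC hs₁ hsε
  have htt := (tendsto_floor_div_mul ht).mono_left hl
  have hclose : ∀ᶠ h in l,
      C * (s - ⌊t / h⌋₊ * h) + dist (eulerNode f a h ⌊t / h⌋₊) (u t) < ε := by
    refine Tendsto.eventually_lt_const (by simpa using hsC : C * (s - t) + dist (u t) (u t) < ε) ?_
    exact ((tendsto_const_nhds.sub htt).const_mul _).add ((hu t).dist tendsto_const_nhds)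
  filter_upwards [hclose, hl self_mem_nhdsWithin, htt.eventually_const_lt (sub_lt_self t hε)]
    with h hclose hh hht n hn
  have hh : 0 < h := hh
  have hns : n * h ≤ s := mul_le_of_lt_floor_div hh hn.2
  have htn : ⌊t / h⌋₊ * h ≤ n * h := by gcongr; exact hn.1
  have hstep : dist (eulerNode f a h ⌊t / h⌋₊) (eulerNode f a h n) ≤ C * (n * h - ⌊t / h⌋₊ * h) :=
    dist_eulerNode_le hh.le hn.1 fun j hj ↦
      (hC h hh.le j ((mul_le_of_lt_floor_div hh (hj.trans hn.2)).trans hs₁.le)).2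
  refine hball (Prod.dist_eq.trans_lt (max_lt ?_ ?_))
  · rw [Real.dist_eq, abs_lt]
    constructor <;> linarith [mem_Iio.1 hsε]
  · calc dist (eulerNode f a h n) (u t)
        ≤ dist (eulerNode f a h ⌊t / h⌋₊) (eulerNode f a h n)
            + dist (eulerNode f a h ⌊t / h⌋₊) (u t) := dist_triangle_left _ _ _
      _ ≤ C * (s - ⌊t / h⌋₊ * h) + dist (eulerNode f a h ⌊t / h⌋₊) (u t) := by
        grw [hstep, hns]
      _ < ε := hclose

variable [l.NeBot]

lemma apply_zero (hu : IsEulerLimit f a l u) : u 0 = a := by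
  have h₀ := hu 0
  simp only [zero_div, Nat.floor_zero, eulerNode] at h₀
  exact tendsto_nhds_unique h₀ tendsto_const_nhds

lemma slope_mem (hu : IsEulerLimit f a l u) (hl : l ≤ 𝓝[>] 0) {C : Set E} (hC : Convex ℝ C)
    (hCc : IsClosed C) (hs : 0 ≤ s) (hst : s < t)
    (hf : ∀ᶠ h in l, ∀ n ∈ Ico ⌊s / h⌋₊ ⌊t / h⌋₊, f (n * h, eulerNode f a h n) ∈ C) :
    slope u s t ∈ C := by
  have hts := (tendsto_floor_div_mul (hs.trans hst.le)).mono_left hl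
  have hss := (tendsto_floor_div_mul hs).mono_left hl
  refine hCc.mem_of_tendsto
    (((hts.sub hss).inv₀ (sub_pos.2 hst).ne').smul ((hu t).sub (hu s))) ?_
  filter_upwards [hf, hl self_mem_nhdsWithin, hss.eventually_lt hts hst] with h hmem hh hlt
  exact inv_smul_eulerNode_sub_mem hC hh (by exact_mod_cast lt_of_mul_lt_mul_right hlt hh.le) hmem

lemma exists_lipschitzOnWith (hu : IsEulerLimit f a l u) (hl : l ≤ 𝓝[>] 0)
    (hf : ∃ M, ∀ t ∈ Icc 0 T, ∀ y, ‖f (t, y)‖ ≤ M * (1 + ‖y‖)) :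
    ∃ C, LipschitzOnWith C u (Icc 0 T) := by
  obtain ⟨C, hC⟩ := exists_eulerNode_bound a hf
  have hslope {s t : ℝ} (hs : 0 ≤ s) (hst : s < t) (ht : t ≤ T) :
      dist (u t) (u s) ≤ C * (t - s) := by
    have : slope u s t ∈ Metric.closedBall 0 (C : ℝ) := by
      refine hu.slope_mem hl (convex_closedBall 0 _) Metric.isClosed_closedBall hs hst ?_
      filter_upwards [hl self_mem_nhdsWithin] with h hh n hn
      rw [mem_closedBall_zero_iff]
      exact (hC h (le_of_lt hh) n ((mul_le_of_lt_floor_div hh hn.2).trans ht)).2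
    rwa [mem_closedBall_zero_iff, slope_def_module, norm_smul_of_nonneg
      (inv_nonneg.2 (sub_nonneg.2 hst.le)), inv_mul_le_iff₀ (sub_pos.2 hst), ← dist_eq_norm,
      mul_comm] at this
  refine ⟨C, LipschitzOnWith.of_dist_le_mul fun s hs t ht ↦ ?_⟩
  rcases lt_trichotomy s t with hst | rfl | hst
  · rw [dist_comm, dist_comm s, Real.dist_eq, abs_of_pos (sub_pos.2 hst)]
    exact hslope hs.1 hst ht.2
  · simp
  · rw [Real.dist_eq, abs_of_pos (sub_pos.2 hst)]
    exact hslope ht.1 hst hs.2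

lemma hasDerivWithinAt_mem (hu : IsEulerLimit f a l u) (hl : l ≤ 𝓝[>] 0)
    (hf : ∀ T, ∃ M, ∀ t ∈ Icc 0 T, ∀ y, ‖f (t, y)‖ ≤ M * (1 + ‖y‖)) (ht : 0 ≤ t)
    {C : Set E} (hC : Convex ℝ C) (hCc : IsClosed C) (hfC : ∀ᶠ p in 𝓝 (t, u t), f p ∈ C)
    {d : E} (hd : HasDerivWithinAt u d (Ioi t) t) : d ∈ C := by
  refine hCc.mem_of_tendsto ((hasDerivWithinAt_iff_tendsto_slope' self_notMem_Ioi).1 hd) ?_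
  filter_upwards [hu.eventually_eulerNode_mem hl hf ht hfC, self_mem_nhdsWithin] with s hs hts
  exact hu.slope_mem hl hC hCc ht hts hs

end IsEulerLimit

theorem exists_solution_of_differential_inclusion [ProperSpace E] {F : ℝ × E → Set E}
    (hF : UpperHemicontinuous F) (hne : ∀ p, (F p).Nonempty) (hconv : ∀ p, Convex ℝ (F p))
    (hclosed : ∀ p, IsClosed (F p))
    (hgrowth : ∀ T, ∃ M, ∀ t ∈ Icc 0 T, ∀ y, ∀ z ∈ F (t, y), ‖z‖ ≤ M * (1 + ‖y‖)) (a : E) :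
    ∃ u : ℝ → E, u 0 = a ∧ (∀ T, ∃ C, LipschitzOnWith C u (Icc 0 T)) ∧
      ∀ t, 0 ≤ t → ∀ d, HasDerivWithinAt u d (Ioi t) t → d ∈ F (t, u t) := by
  choose f hfF using hne
  have hf (T : ℝ) : ∃ M, ∀ t ∈ Icc 0 T, ∀ y, ‖f (t, y)‖ ≤ M * (1 + ‖y‖) :=
    (hgrowth T).imp fun M hM t ht y ↦ hM t ht y _ (hfF _)
  have hl : ↑(Ultrafilter.of (𝓝[>] (0 : ℝ))) ≤ 𝓝[>] (0 : ℝ) := Ultrafilter.of_le _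
  obtain ⟨u, hu⟩ := exists_isEulerLimit a hf _ hl
  refine ⟨u, hu.apply_zero, fun T ↦ hu.exists_lipschitzOnWith hl (hf T), fun t ht d hd ↦ ?_⟩
  rw [← (hclosed (t, u t)).closure_eq, Metric.closure_eq_iInter_cthickening, mem_iInter₂]
  intro ε hε
  refine hu.hasDerivWithinAt_mem hl hf ht ((hconv _).cthickening ε)
    Metric.isClosed_cthickening ?_ hd
  filter_upwards [upperHemicontinuousAt_iff_forall_isOpen.1 (hF (t, u t)) _
    Metric.isOpen_thickening (Metric.self_subset_thickening hε _)] with p hp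
  exact Metric.thickening_subset_cthickening _ _ (hp (hfF p))

end EulerPolygon

section UpperHemicontinuity

variable {α β γ : Type*} [TopologicalSpace α] [TopologicalSpace β] [TopologicalSpace γ]

lemma upperHemicontinuous_image {F : α → Set β} (hF : UpperHemicontinuous F) {g : β → γ}
    (hg : Continuous g) : UpperHemicontinuous fun x ↦ g '' F x := by
  rw [upperHemicontinuous_iff_forall_isOpen] at hF ⊢
  intro x U hU hxU
  filter_upwards [hF x _ (hU.preimage hg) (image_subset_iff.1 hxU)] with y hy
  exact image_subset_iff.2 hy

lemma upperHemicontinuous_prod {F : α → Set β} {G : α → Set γ} (hF : UpperHemicontinuous F)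
    (hG : UpperHemicontinuous G) (hFc : ∀ x, IsCompact (F x)) (hGc : ∀ x, IsCompact (G x)) :
    UpperHemicontinuous fun x ↦ F x ×ˢ G x := by
  rw [upperHemicontinuous_iff_forall_isOpen] at hF hG ⊢
  intro x W hW hxW
  obtain ⟨U, V, hU, hV, hxU, hxV, hUV⟩ := generalized_tube_lemma (hFc x) (hGc x) hW hxW
  filter_upwards [hF x U hU hxU, hG x V hV hxV] with y hyU hyV
  exact (prod_mono hyU hyV).trans hUV

lemma upperHemicontinuous_Ssign : UpperHemicontinuous Ssign :=
  upperHemicontinuous_iff_forall_isOpen.2 fun a _ _ ha ↦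
    (eventually_Ssign_subset a).mono fun _ hy ↦ hy.trans ha

end UpperHemicontinuity

section LocallyLipschitz

variable {g : ℝ → ℝ}

lemma intervalIntegrable_deriv_of_lipschitzOnWith (hg : ∀ T, ∃ C, LipschitzOnWith C g (Icc 0 T))
    {s t : ℝ} (hs : 0 ≤ s) (hst : s ≤ t) : IntervalIntegrable (deriv g) volume s t := by
  obtain ⟨C, hC⟩ := hg t
  refine (hC.mono ?_).absolutelyContinuousOnInterval.intervalIntegrable_deriv
  rw [uIcc_of_le hst]
  exact Icc_subset_Icc_left hs

lemma eq_add_integral_deriv_of_lipschitzOnWith (hg : ∀ T, ∃ C, LipschitzOnWith C g (Icc 0 T))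
    {t : ℝ} (ht : 0 ≤ t) : g t = g 0 + ∫ u in (0 : ℝ)..t, deriv g u := by
  obtain ⟨C, hC⟩ := hg t
  rw [← uIcc_of_le ht] at hC
  rw [hC.absolutelyContinuousOnInterval.integral_deriv_eq_sub, add_sub_cancel]

lemma ae_differentiableAt_of_lipschitzOnWith (hg : ∀ T, ∃ C, LipschitzOnWith C g (Icc 0 T)) :
    ∀ᵐ t, 0 ≤ t → DifferentiableAt ℝ g t := by
  have hbounded (n : ℕ) : ∀ᵐ t, t ∈ uIcc (0 : ℝ) n → DifferentiableAt ℝ g t := by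
    obtain ⟨C, hC⟩ := hg n
    rw [← uIcc_of_le n.cast_nonneg] at hC
    exact hC.absolutelyContinuousOnInterval.ae_differentiableAt
  filter_upwards [ae_all_iff.2 hbounded] with t ht ht₀
  obtain ⟨n, hn⟩ := exists_nat_ge t
  exact ht n (uIcc_of_le (ht₀.trans hn) ▸ ⟨ht₀, hn⟩)

end LocallyLipschitz

/-- The right-hand side of the error dynamics in the variables `(e₁, e₂ - D)`, where `D` is a
primitive of the disturbance: unlike the original one it is upper hemicontinuous in time even for
discontinuous disturbances. -/
def reducedField (k₁ k₂ L : ℝ) (D : ℝ → ℝ) (p : ℝ × ℝ × ℝ) : Set (ℝ × ℝ) :=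
  {p.2.2 + D p.1 - L * k₁ * spow p.2.1 (1 / 2)} ×ˢ ((-(L ^ 2 * k₂)) • Ssign p.2.1)

section Existence

variable {k₁ k₂ L : ℝ} {D δ : ℝ → ℝ} {p : ℝ × ℝ × ℝ}

lemma nonempty_reducedField : (reducedField k₁ k₂ L D p).Nonempty :=
  (singleton_nonempty _).prod nonempty_Ssign.smul_set

lemma convex_reducedField : Convex ℝ (reducedField k₁ k₂ L D p) :=
  (convex_singleton _).prod (convex_Ssign.smul _)

lemma isClosed_reducedField : IsClosed (reducedField k₁ k₂ L D p) :=
  isClosed_singleton.prod (isCompact_Ssign.smul _).isClosed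

lemma upperHemicontinuous_reducedField (hD : Continuous D) :
    UpperHemicontinuous (reducedField k₁ k₂ L D) := by
  refine upperHemicontinuous_prod (upperHemicontinuous_singleton_iff.2 ?_)
    (upperHemicontinuous_image (upperHemicontinuous_Ssign.comp (by fun_prop)) (by fun_prop))
    (fun _ ↦ isCompact_singleton) fun _ ↦ isCompact_Ssign.smul _
  have := continuous_spow one_half_pos
  fun_prop

lemma exists_norm_le_of_mem_reducedField (hD : Continuous D) (T : ℝ) :
    ∃ M, ∀ t ∈ Icc 0 T, ∀ y, ∀ z ∈ reducedField k₁ k₂ L D (t, y), ‖z‖ ≤ M * (1 + ‖y‖) := by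
  obtain ⟨B, hB⟩ := isCompact_Icc.exists_bound_of_continuousOn (hD.continuousOn (s := Icc 0 T))
  refine ⟨max (1 + B + |L * k₁|) |L ^ 2 * k₂|, ?_⟩
  rintro t ht ⟨x, v⟩ ⟨z₁, z₂⟩ ⟨hz₁, σ, hσ, hz₂⟩
  simp only [mem_singleton_iff] at hz₁
  simp only [smul_eq_mul] at hz₂
  have hx : |x| ≤ ‖(x, v)‖ := le_max_left _ _
  have hv : |v| ≤ ‖(x, v)‖ := le_max_right _ _
  have hDt : |D t| ≤ B := hB t ht
  have hσ₁ : |σ| ≤ 1 := abs_le.2 (Ssign_subset_Icc hσ)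
  have hspow : |spow x (1 / 2)| ≤ 1 + |x| :=
    abs_spow_le_one_add_abs (by norm_num) (by norm_num)
  rw [Prod.norm_def, max_le_iff, max_mul_of_nonneg _ _ (by positivity)]
  constructor
  · refine le_max_of_le_left ?_
    calc ‖z₁‖ ≤ |v| + |D t| + |L * k₁| * |spow x (1 / 2)| := by
          rw [hz₁, Real.norm_eq_abs, ← abs_mul]
          exact (abs_sub _ _).trans (by gcongr; exact abs_add_le _ _)
      _ ≤ ‖(x, v)‖ + B + |L * k₁| * (1 + ‖(x, v)‖) := by grw [hv, hDt, hspow, hx]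
      _ ≤ (1 + B + |L * k₁|) * (1 + ‖(x, v)‖) := by
          nlinarith [norm_nonneg (x, v), (abs_nonneg _).trans hDt]
  · refine le_max_of_le_right ?_
    calc ‖z₂‖ = |L ^ 2 * k₂| * |σ| := by rw [← hz₂, Real.norm_eq_abs, abs_mul, abs_neg]
      _ ≤ |L ^ 2 * k₂| * (1 + ‖(x, v)‖) := by
          gcongr
          linarith [norm_nonneg (x, v)]

lemma isSol2_of_deriv_mem_reducedField (hδ : ∀ s t, IntervalIntegrable δ volume s t) {x y : ℝ → ℝ}
    (hx : ∀ T, ∃ C, LipschitzOnWith C x (Icc 0 T)) (hy : ∀ T, ∃ C, LipschitzOnWith C y (Icc 0 T))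
    (hmem : ∀ t, 0 ≤ t → DifferentiableAt ℝ x t → DifferentiableAt ℝ y t →
      (deriv x t, deriv y t) ∈ reducedField k₁ k₂ L (∫ r in (0 : ℝ)..·, δ r) (t, x t, y t)) :
    IsSol2 k₁ k₂ L δ x (fun t ↦ y t + ∫ r in (0 : ℝ)..t, δ r) (deriv x) (deriv y + δ) := by
  refine ⟨fun s t hs hst ↦ ⟨intervalIntegrable_deriv_of_lipschitzOnWith hx hs hst,
      (intervalIntegrable_deriv_of_lipschitzOnWith hy hs hst).add (hδ s t)⟩,
    fun t ht ↦ eq_add_integral_deriv_of_lipschitzOnWith hx ht, fun t ht ↦ ?_, ?_⟩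
  · simp only [Pi.add_apply, intervalIntegral.integral_same, add_zero]
    rw [intervalIntegral.integral_add
      (intervalIntegrable_deriv_of_lipschitzOnWith hy le_rfl ht) (hδ 0 t), ← add_assoc,
      ← eq_add_integral_deriv_of_lipschitzOnWith hy ht]
  · filter_upwards [ae_differentiableAt_of_lipschitzOnWith hx,
      ae_differentiableAt_of_lipschitzOnWith hy] with t hxt hyt ht
    obtain ⟨hfst, σ, hσ, hsnd⟩ := hmem t ht (hxt ht) (hyt ht)
    simp only [smul_eq_mul] at hsnd
    refine ⟨hfst, σ, hσ, ?_⟩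
    rw [Pi.add_apply, ← hsnd]
    ring

theorem exists_isSol2 (hδ : ∀ s t, IntervalIntegrable δ volume s t) (a b : ℝ) :
    ∃ e₁ e₂ e₁' e₂' : ℝ → ℝ, IsSol2 k₁ k₂ L δ e₁ e₂ e₁' e₂' ∧ e₁ 0 = a ∧ e₂ 0 = b := by
  have hD := intervalIntegral.continuous_primitive hδ 0
  obtain ⟨u, hu₀, hlip, hu⟩ := exists_solution_of_differential_inclusion
    (upperHemicontinuous_reducedField (k₁ := k₁) (k₂ := k₂) (L := L) hD)
    (fun _ ↦ nonempty_reducedField) (fun _ ↦ convex_reducedField) (fun _ ↦ isClosed_reducedField)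
    (exists_norm_le_of_mem_reducedField hD) (a, b)
  refine ⟨_, _, _, _, isSol2_of_deriv_mem_reducedField hδ
    (fun T ↦ let ⟨_, hC⟩ := hlip T; ⟨_, LipschitzWith.prod_fst.comp_lipschitzOnWith hC⟩)
    (fun T ↦ let ⟨_, hC⟩ := hlip T; ⟨_, LipschitzWith.prod_snd.comp_lipschitzOnWith hC⟩)
    fun t ht hx hy ↦ hu t ht _ (hx.hasDerivAt.prodMk hy.hasDerivAt).hasDerivWithinAt, ?_, ?_⟩
  · simp only [Function.comp_apply, hu₀]
  · simp only [Function.comp_apply, hu₀, intervalIntegral.integral_same, add_zero]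

end Existence

theorem exact_differentiator_m2_general {k₁ k₂ L w : ℝ} {δ : ℝ → ℝ} (hK : 0 < L * k₁)
    (hgain : 2 * (L ^ 2 * k₂ + w) < (L * k₁) ^ 2) (hw : w < L ^ 2 * k₂) (hδ : ∀ t, |δ t| ≤ w)
    (hδm : AEStronglyMeasurable δ) :
    (∀ a b : ℝ, ∃ e₁ e₂ e₁' e₂' : ℝ → ℝ,
        IsSol2 k₁ k₂ L δ e₁ e₂ e₁' e₂' ∧ e₁ 0 = a ∧ e₂ 0 = b) ∧
      ∀ e₁ e₂ e₁' e₂' : ℝ → ℝ, IsSol2 k₁ k₂ L δ e₁ e₂ e₁' e₂' →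
        ∃ T ≥ (0 : ℝ), ∀ t ≥ T, e₁ t = 0 ∧ e₂ t = 0 := by
  refine ⟨exists_isSol2 fun s t ↦ ?_, fun _ _ _ _ h ↦ h.exists_forall_eq_zero hδ hK hgain hw⟩
  exact (intervalIntegrable_const (c := w)).mono_fun' hδm.restrict (.of_forall hδ)

/-- Levant's exact differentiator (m = 2 homogeneous observer of degree -1): for
appropriate gains k₁, k₂ > 0, for any L ≥ 1 and bounded disturbance |δ| ≤ w̄ with
L²k₂ > w̄, solutions exist from any initial condition and every solution reaches the
origin in finite time. -/
theorem exact_differentiator_m2 :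
    ∃ k₁ > (0:ℝ), ∃ k₂ > (0:ℝ), ∀ (L wbar : ℝ) (δ : ℝ → ℝ),
      1 ≤ L → 0 ≤ wbar → wbar < L ^ 2 * k₂ → (∀ t, |δ t| ≤ wbar) →
      Measurable δ →
      ((∀ a b : ℝ, ∃ e₁ e₂ e₁' e₂' : ℝ → ℝ,
          IsSol2 k₁ k₂ L δ e₁ e₂ e₁' e₂' ∧ e₁ 0 = a ∧ e₂ 0 = b) ∧
       (∀ e₁ e₂ e₁' e₂' : ℝ → ℝ, IsSol2 k₁ k₂ L δ e₁ e₂ e₁' e₂' →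
          ∃ T ≥ (0:ℝ), ∀ t ≥ T, e₁ t = 0 ∧ e₂ t = 0)) := by
  refine ⟨2, by norm_num, 1, by norm_num, fun L w δ hL _ hw hδ hδm ↦ ?_⟩
  exact exact_differentiator_m2_general (by linarith) (by linarith) hw hδ hδm.aestronglyMeasurable
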